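/- arXiv:2407.07738 — 2 statements merged into one kernel-verified Lean document; each statement's English description precedes it below -/
import Mathlib

section
/- Let I ⊆ ℝ be an open interval and let a : I → ℝ² be a smooth timelike frontal with frame: smooth maps ν, μ : I → ℝ² and a smooth function β : I → ℝ such that ⟨ν, ν⟩ ≡ 1, ⟨μ, μ⟩ ≡ -1, ⟨μ, ν⟩ ≡ 0 and a'(t) = β(t)μ(t) for all t ∈ I; let r : I → ℝ be a smooth positive function. If f : I → ℝ² is an envelope of the pseudo-circle family C(a(t), r(t)), then for every t ∈ I there exist θ ∈ ℝ and ε ∈ {-1, 1} such that f(t) = a(t) + r(t)·(sinh(θ)·μ(t) + ε·cosh(θ)·ν(t)) and r'(t) - β(t)·sinh(θ) = 0. -/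
/-! Put `w = f - a`. Differentiating `⟨w, w⟩ = r²` and using the envelope condition `⟨f', w⟩ = 0` leaves
`-⟨a', w⟩ = r r'`, that is `-β ⟨μ, w⟩ = r r'`. Since `μ, ν` is a pseudo-orthonormal basis of the
plane, `w = -⟨w, μ⟩ μ + ⟨w, ν⟩ ν` (`mink_frame_expansion`); writing this as `w = r (s μ + c ν)`, the
circle equation becomes `c² = 1 + s²`, so `s = sinh θ` and `c = ± cosh θ` with `θ = arsinh s`, and
the differentiated equation becomes `β s = r'`, which is the second claim.
-/

open Real Set

noncomputable def mink (x y : ℝ × ℝ) : ℝ := -(x.1 * y.1) + x.2 * y.2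

/-- `f` is an envelope of the pseudo-circle family `C(a(t), +r(t))` on `I`. -/
def IsEnvelopePos (I : Set ℝ) (a : ℝ → ℝ × ℝ) (r : ℝ → ℝ) (f : ℝ → ℝ × ℝ) : Prop :=
  ContDiffOn ℝ (⊤ : ℕ∞) f I ∧
    ∀ t ∈ I, mink (f t - a t) (f t - a t) = (r t) ^ 2 ∧ mink (deriv f t) (f t - a t) = 0

/-- Expansion of a vector in a pseudo-orthonormal frame. With `d = det (μ, ν)` one has
`ν = d • (μ.2, μ.1)` and `d² = 1`, from which the completeness relations of the frame follow. -/
lemma mink_frame_expansion {μ ν : ℝ × ℝ} (hνν : mink ν ν = 1) (hμμ : mink μ μ = -1)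
    (hμν : mink μ ν = 0) (w : ℝ × ℝ) :
    w = (-mink w μ) • μ + mink w ν • ν := by
  obtain ⟨p, q⟩ := μ
  obtain ⟨x, y⟩ := ν
  obtain ⟨u, v⟩ := w
  simp only [mink] at hνν hμμ hμν
  obtain ⟨d, hd⟩ : ∃ d, d = p * y - q * x := ⟨_, rfl⟩
  have hx : x = q * d := by subst hd; linear_combination x * hμμ - p * hμν
  have hy : y = p * d := by subst hd; linear_combination y * hμμ - q * hμν
  have hd2 : d ^ 2 = 1 := by
    rw [hx, hy] at hνν
    linear_combination hνν + d ^ 2 * hμμ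
  have h1 : p * p - x * x = 1 := by
    rw [hx]; linear_combination -hμμ - q ^ 2 * hd2
  have h2 : p * q = x * y := by
    rw [hx, hy]; linear_combination -(p * q) * hd2
  have h3 : y * y - q * q = 1 := by
    rw [hy]; linear_combination -hμμ + p ^ 2 * hd2
  ext
  · simp only [mink, Prod.fst_add, Prod.smul_fst, smul_eq_mul]
    linear_combination -u * h1 + v * h2
  · simp only [mink, Prod.snd_add, Prod.smul_snd, smul_eq_mul]
    linear_combination -u * h2 - v * h3

lemma hasDerivAt_mink_self {w : ℝ → ℝ × ℝ} {w' : ℝ × ℝ} {t : ℝ} (h : HasDerivAt w w' t) :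
    HasDerivAt (fun s => mink (w s) (w s)) (2 * mink w' (w t)) t := by
  have h1 : HasDerivAt (fun s => (w s).1) w'.1 t := h.fst
  have h2 : HasDerivAt (fun s => (w s).2) w'.2 t := h.snd
  refine ((h1.mul h1).neg.add (h2.mul h2)).congr_deriv ?_
  simp only [mink]
  ring

theorem envelope_representation_timelike
    (I : Set ℝ) (hIopen : IsOpen I) (hIconn : I.OrdConnected)
    (a ν μ : ℝ → ℝ × ℝ) (β r : ℝ → ℝ)
    (hs0 : ContDiffOn ℝ (⊤ : ℕ∞) a I)
    (hs1 : ContDiffOn ℝ (⊤ : ℕ∞) ν I)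
    (hs2 : ContDiffOn ℝ (⊤ : ℕ∞) μ I)
    (hs3 : ContDiffOn ℝ (⊤ : ℕ∞) β I)
    (hs4 : ContDiffOn ℝ (⊤ : ℕ∞) r I)
    (hνν : ∀ t ∈ I, mink (ν t) (ν t) = 1)
    (hμμ : ∀ t ∈ I, mink (μ t) (μ t) = -1)
    (hμν : ∀ t ∈ I, mink (μ t) (ν t) = 0)
    (hderiv : ∀ t ∈ I, deriv a t = β t • μ t)
    (hrpos : ∀ t ∈ I, 0 < r t)
    (f : ℝ → ℝ × ℝ)
    (hf : IsEnvelopePos I a r f) :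
    ∀ t ∈ I, ∃ θ ε : ℝ, (ε = 1 ∨ ε = -1) ∧
      f t = a t + r t • (Real.sinh θ • μ t + (ε * Real.cosh θ) • ν t) ∧
      deriv r t - β t * Real.sinh θ = 0 := by
  intro t ht
  obtain ⟨hfs, hfe⟩ := hf
  have hI : I ∈ nhds t := hIopen.mem_nhds ht
  have ha := ((hs0.contDiffAt hI).differentiableAt (by simp)).hasDerivAt
  have hr := ((hs4.contDiffAt hI).differentiableAt (by simp)).hasDerivAt
  have hf' := ((hfs.contDiffAt hI).differentiableAt (by simp)).hasDerivAt
  obtain ⟨hc, he⟩ := hfe t ht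
  have hr0 : r t ≠ 0 := (hrpos t ht).ne'
  have hcircle : 2 * mink (deriv f t - deriv a t) (f t - a t) = 2 * (r t * deriv r t) := by
    have h1 := hasDerivAt_mink_self (hf'.sub ha)
    have h2 : HasDerivAt (fun s => r s ^ 2) (2 * (r t * deriv r t)) t :=
      (hr.pow 2).congr_deriv (by ring)
    refine h1.unique (h2.congr_of_eventuallyEq ?_)
    filter_upwards [hI] with s hs using (hfe s hs).1
  rw [hderiv t ht] at hcircle
  obtain ⟨w, hw⟩ : ∃ w, w = f t - a t := ⟨_, rfl⟩
  rw [← hw] at hc he hcircle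
  have hrad : -(β t * mink w (μ t)) = r t * deriv r t := by
    simp only [mink, Prod.fst_sub, Prod.snd_sub, Prod.smul_fst, Prod.smul_snd, smul_eq_mul]
      at hcircle he ⊢
    linear_combination hcircle / 2 - he
  have hexp := mink_frame_expansion (hνν t ht) (hμμ t ht) (hμν t ht) w
  obtain ⟨s, hs⟩ : ∃ s, s = -mink w (μ t) / r t := ⟨_, rfl⟩
  obtain ⟨c, hcdef⟩ : ∃ c, c = mink w (ν t) / r t := ⟨_, rfl⟩
  have hs' : -mink w (μ t) = r t * s := by rw [hs]; field_simp
  have hc' : mink w (ν t) = r t * c := by rw [hcdef]; field_simp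
  rw [hs', hc'] at hexp
  have hsc : c ^ 2 = 1 + s ^ 2 := by
    have h1 := hνν t ht
    have h2 := hμμ t ht
    have h3 := hμν t ht
    rw [hexp] at hc
    simp only [mink, Prod.fst_add, Prod.snd_add, Prod.smul_fst, Prod.smul_snd, smul_eq_mul]
      at h1 h2 h3 hc
    apply mul_left_cancel₀ (pow_ne_zero 2 hr0)
    linear_combination hc - r t ^ 2 * s ^ 2 * h2 - r t ^ 2 * c ^ 2 * h1 - 2 * r t ^ 2 * s * c * h3
  obtain ⟨ε, hε, hεc⟩ : ∃ ε : ℝ, (ε = 1 ∨ ε = -1) ∧ c = ε * Real.cosh (Real.arsinh s) := by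
    have h : c ^ 2 = Real.cosh (Real.arsinh s) ^ 2 := by
      rw [Real.cosh_sq, Real.sinh_arsinh, hsc, add_comm]
    rcases sq_eq_sq_iff_eq_or_eq_neg.mp h with h | h
    · exact ⟨1, Or.inl rfl, by rw [h, one_mul]⟩
    · exact ⟨-1, Or.inr rfl, by rw [h, neg_one_mul]⟩
  refine ⟨Real.arsinh s, ε, hε, ?_, ?_⟩
  · rw [← hεc, Real.sinh_arsinh, smul_add, smul_smul, smul_smul, ← hexp, hw]
    abel
  · rw [Real.sinh_arsinh]
    apply mul_left_cancel₀ hr0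
    linear_combination β t * hs' - hrad
end

section
/- Let I ⊆ ℝ be an open interval and let a : I → ℝ² be a smooth spacelike frontal with frame: smooth maps ν, μ : I → ℝ² and a smooth function β : I → ℝ such that ⟨ν, ν⟩ ≡ -1, ⟨μ, μ⟩ ≡ 1, ⟨μ, ν⟩ ≡ 0 and a'(t) = β(t)μ(t) for all t ∈ I. Let r : I → ℝ be a positive constant function. If a is not a point, i.e. there exists t₀ ∈ I with β(t₀) ≠ 0, then the pseudo-circle family C(a(t), r(t)) does not create an envelope: there is no smooth map f : I → ℝ² such that for every t ∈ I, ⟨f(t) - a(t), f(t) - a(t)⟩ = r(t)² and ⟨f'(t), f(t) - a(t)⟩ = 0. -/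
/-! Put `g = f - a`. Since `⟨g, g⟩ = c²` is constant, `⟨g', g⟩ = 0`, and subtracting this from
`⟨f', g⟩ = 0` leaves `⟨a', g⟩ = β ⟨μ, g⟩ = 0`. At a point with `β ≠ 0` the vectors `μ` and `g` are
then pseudo-orthogonal, although `⟨μ, μ⟩` and `⟨g, g⟩` are both positive: impossible in signature
`(1, 1)`. -/

open Real Set

/-- The pseudo-orthogonal complement of a spacelike vector in the Minkowski plane contains no
spacelike vector. -/
lemma mink_ne_zero_of_pos {x y : ℝ × ℝ} (hx : 0 < mink x x) (hy : 0 < mink y y) :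
    mink x y ≠ 0 := by
  unfold mink at *
  intro h
  have h1 : x.2 * y.2 = x.1 * y.1 := by linarith
  have h2 : (x.2 * x.2) * (y.2 * y.2) = (x.1 * x.1) * (y.1 * y.1) := by
    calc _ = (x.2 * y.2) * (x.2 * y.2) := by ring
      _ = (x.1 * y.1) * (x.1 * y.1) := by rw [h1]
      _ = _ := by ring
  have h3 : (x.1 * x.1) * (y.1 * y.1) < (x.2 * x.2) * (y.2 * y.2) :=
    mul_lt_mul'' (by linarith) (by linarith) (mul_self_nonneg _) (mul_self_nonneg _)
  linarith

lemma HasDerivAt.mink_self {g : ℝ → ℝ × ℝ} {g' : ℝ × ℝ} {t : ℝ} (hg : HasDerivAt g g' t) :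
    HasDerivAt (fun s => mink (g s) (g s)) (2 * mink g' (g t)) t := by
  have h1 : HasDerivAt (fun s => (g s).1) g'.1 t := hg.fst
  have h2 : HasDerivAt (fun s => (g s).2) g'.2 t := hg.snd
  refine ((h1.mul h1).neg.add (h2.mul h2)).congr_deriv ?_
  simp only [mink]
  ring

theorem constant_radius_spacelike_no_envelope
    (I : Set ℝ) (hIopen : IsOpen I) (hIconn : I.OrdConnected)
    (a ν μ : ℝ → ℝ × ℝ) (β : ℝ → ℝ)
    (hs0 : ContDiffOn ℝ (⊤ : ℕ∞) a I)
    (hs1 : ContDiffOn ℝ (⊤ : ℕ∞) ν I)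
    (hs2 : ContDiffOn ℝ (⊤ : ℕ∞) μ I)
    (hs3 : ContDiffOn ℝ (⊤ : ℕ∞) β I)
    (hνν : ∀ t ∈ I, mink (ν t) (ν t) = -1)
    (hμμ : ∀ t ∈ I, mink (μ t) (μ t) = 1)
    (hμν : ∀ t ∈ I, mink (μ t) (ν t) = 0)
    (hderiv : ∀ t ∈ I, deriv a t = β t • μ t)
    (r : ℝ → ℝ) (c : ℝ) (hc : 0 < c) (hrconst : ∀ t, r t = c)
    (t₀ : ℝ) (ht₀ : t₀ ∈ I) (hβt₀ : β t₀ ≠ 0) :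
    ¬ ∃ f : ℝ → ℝ × ℝ, IsEnvelopePos I a r f := by
  rintro ⟨f, hf, henv⟩
  have hI : I ∈ nhds t₀ := hIopen.mem_nhds ht₀
  have hfd : HasDerivAt f (deriv f t₀) t₀ :=
    ((hf.contDiffAt hI).differentiableAt (by simp)).hasDerivAt
  have had : HasDerivAt a (deriv a t₀) t₀ :=
    ((hs0.contDiffAt hI).differentiableAt (by simp)).hasDerivAt
  have hconst : (fun s => mink (f s - a s) (f s - a s)) =ᶠ[nhds t₀] fun _ => c ^ 2 := by
    filter_upwards [hI] with s hs
    rw [(henv s hs).1, hrconst]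
  have hzero : 2 * mink (deriv f t₀ - deriv a t₀) (f t₀ - a t₀) = 0 :=
    (hfd.sub had).mink_self.unique ((hasDerivAt_const t₀ (c ^ 2)).congr_of_eventuallyEq hconst)
  obtain ⟨hcirc, htan⟩ := henv t₀ ht₀
  have horth : β t₀ * mink (μ t₀) (f t₀ - a t₀) = 0 := by
    rw [hderiv t₀ ht₀] at hzero
    simp only [mink, Prod.fst_sub, Prod.snd_sub, Prod.smul_fst, Prod.smul_snd, smul_eq_mul]
      at hzero htan ⊢
    linear_combination htan - hzero / 2
  refine mink_ne_zero_of_pos (x := μ t₀) (y := f t₀ - a t₀) ?_ ?_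
    ((mul_eq_zero.mp horth).resolve_left hβt₀)
  · rw [hμμ t₀ ht₀]; exact one_pos
  · rw [hcirc, hrconst]; positivity
end
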